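/- Exact expected check-loss increment: let X be a real-valued random variable whose law is atomless and whose cumulative distribution function F(s) = P(X ≤ s) satisfies F(0) = τ for some τ ∈ (0,1). Then for every v ∈ ℝ, E[ρ_τ(X − v) − ρ_τ(X)] = ∫₀^v (F(s) − τ) ds, where ∫₀^v denotes the signed Lebesgue integral; in particular the expectation is finite. -/

import Mathlib

/-!
Up to the linear term `τ * x`, the check function is the negative part of `x`, so the increment of
the check loss is `((b - X)⁺ - (a - X)⁺) - τ (b - a)`. Since `s ↦ (s - x)⁺` has right derivative
`1{x ≤ s}`, its increment is `∫ s in a..b, 1{x ≤ s}`, and Fubini's theorem turns the expectation of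
the latter into the integral of the distribution function.
-/

open MeasureTheory

/-- The check function `ρ_τ(x) = x (τ - 1{x<0})`. -/
noncomputable def rho (τ x : ℝ) : ℝ := x * (τ - if x < 0 then 1 else 0)

lemma hasDerivWithinAt_max_sub_zero_Ioi (x s : ℝ) :
    HasDerivWithinAt (fun t => max (t - x) 0) ((Set.Ici x).indicator 1 s) (Set.Ioi s) s := by
  rcases le_or_gt x s with hxs | hsx
  · rw [Set.indicator_of_mem (Set.mem_Ici.mpr hxs)]
    refine ((hasDerivAt_id s).sub_const x).hasDerivWithinAt.congr (fun t ht => ?_) ?_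
    · exact max_eq_left (sub_nonneg.mpr (hxs.trans (Set.mem_Ioi.mp ht).le))
    · exact max_eq_left (sub_nonneg.mpr hxs)
  · rw [Set.indicator_of_notMem (Set.notMem_Ici.mpr hsx)]
    refine ((hasDerivAt_const s (0 : ℝ)).congr_of_eventuallyEq ?_).hasDerivWithinAt
    filter_upwards [Iio_mem_nhds hsx] with t htx
    exact max_eq_right (sub_nonpos.mpr (Set.mem_Iio.mp htx).le)

lemma intervalIntegral_indicator_Ici_one (x a b : ℝ) :
    ∫ s in a..b, (Set.Ici x).indicator (1 : ℝ → ℝ) s = max (b - x) 0 - max (a - x) 0 :=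
  intervalIntegral.integral_eq_sub_of_hasDeriv_right (f := fun t => max (t - x) 0)
    (by fun_prop) (fun s _ => hasDerivWithinAt_max_sub_zero_Ioi x s)
    (intervalIntegrable_iff.mpr <|
      (intervalIntegrable_iff.mp intervalIntegrable_const).indicator measurableSet_Ici)

section Expectation

variable {Ω : Type*} [MeasurableSpace Ω] {μ : Measure Ω} [IsFiniteMeasure μ] {X : Ω → ℝ}

lemma integrable_max_sub_zero_sub_max_sub_zero (hX : AEMeasurable X μ) (a b : ℝ) :
    Integrable (fun ω => max (b - X ω) 0 - max (a - X ω) 0) μ := by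
  refine Integrable.of_bound (by fun_prop) |b - a| (.of_forall fun ω => ?_)
  simpa only [Real.norm_eq_abs, sub_sub_sub_cancel_right] using
    abs_max_sub_max_le_abs (b - X ω) (a - X ω) 0

lemma integrable_uncurry_indicator_Ici (hX : AEMeasurable X μ) (ν : Measure ℝ)
    [IsFiniteMeasure ν] :
    Integrable (Function.uncurry fun s ω => (Set.Ici (X ω)).indicator (1 : ℝ → ℝ) s)
      (ν.prod μ) := by
  have hle : NullMeasurableSet {p : ℝ × Ω | X p.2 ≤ p.1} (ν.prod μ) :=
    nullMeasurableSet_le hX.comp_snd measurable_fst.aemeasurable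
  exact (integrable_const (1 : ℝ)).indicator₀ hle

lemma integral_max_sub_zero_sub_max_sub_zero (hX : AEMeasurable X μ) (a b : ℝ) :
    ∫ ω, (max (b - X ω) 0 - max (a - X ω) 0) ∂μ = ∫ s in a..b, μ.real {ω | X ω ≤ s} := by
  have : IsFiniteMeasure (volume.restrict (Set.uIoc a b)) :=
    inferInstanceAs (IsFiniteMeasure (volume.restrict (Set.Ioc _ _)))
  have hsection (s : ℝ) :
      ∫ ω, (Set.Ici (X ω)).indicator (1 : ℝ → ℝ) s ∂μ = μ.real {ω | X ω ≤ s} :=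
    (integral_indicator₀ (nullMeasurableSet_le hX aemeasurable_const)).trans
      setIntegral_one_eq_measureReal
  calc ∫ ω, (max (b - X ω) 0 - max (a - X ω) 0) ∂μ
      = ∫ ω, (∫ s in a..b, (Set.Ici (X ω)).indicator (1 : ℝ → ℝ) s) ∂μ := by
        simp only [intervalIntegral_indicator_Ici_one]
    _ = ∫ s in a..b, (∫ ω, (Set.Ici (X ω)).indicator (1 : ℝ → ℝ) s ∂μ) :=
        (intervalIntegral_integral_swap (integrable_uncurry_indicator_Ici hX _)).symm
    _ = ∫ s in a..b, μ.real {ω | X ω ≤ s} := by simp only [hsection]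

lemma intervalIntegrable_measureReal_setOf_le (a b : ℝ) :
    IntervalIntegrable (fun s => μ.real {ω | X ω ≤ s}) volume a b :=
  Monotone.intervalIntegrable fun _ _ hst => measureReal_mono fun _ hω => le_trans hω hst

end Expectation

lemma rho_eq_mul_add_max (τ x : ℝ) : rho τ x = τ * x + max (-x) 0 := by
  unfold rho
  split_ifs with hx
  · rw [max_eq_left (neg_nonneg.mpr hx.le)]; ring
  · rw [max_eq_right (neg_nonpos.mpr (not_lt.mp hx))]; ring

lemma rho_sub_sub_rho_sub (τ x a b : ℝ) :
    rho τ (x - b) - rho τ (x - a) = max (b - x) 0 - max (a - x) 0 - τ * (b - a) := by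
  simp only [rho_eq_mul_add_max, neg_sub]
  ring

theorem expected_check_loss_increment_general {Ω : Type*} [MeasurableSpace Ω]
    {μ : Measure Ω} [IsProbabilityMeasure μ] {X : Ω → ℝ} (hX : AEMeasurable X μ) (τ a b : ℝ) :
    Integrable (fun ω => rho τ (X ω - b) - rho τ (X ω - a)) μ ∧
      ∫ ω, (rho τ (X ω - b) - rho τ (X ω - a)) ∂μ =
        ∫ s in a..b, (μ.real {ω | X ω ≤ s} - τ) := by
  have hhinge := integrable_max_sub_zero_sub_max_sub_zero hX a b
  simp only [rho_sub_sub_rho_sub]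
  refine ⟨hhinge.sub (integrable_const _), ?_⟩
  calc ∫ ω, (max (b - X ω) 0 - max (a - X ω) 0 - τ * (b - a)) ∂μ
      = ∫ ω, (max (b - X ω) 0 - max (a - X ω) 0) ∂μ - τ * (b - a) := by
        rw [integral_sub hhinge (integrable_const _), integral_const, probReal_univ, one_smul]
    _ = (∫ s in a..b, μ.real {ω | X ω ≤ s}) - ∫ _ in a..b, τ := by
        rw [integral_max_sub_zero_sub_max_sub_zero hX, intervalIntegral.integral_const,
          smul_eq_mul, mul_comm τ]
    _ = ∫ s in a..b, (μ.real {ω | X ω ≤ s} - τ) :=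
        (intervalIntegral.integral_sub (intervalIntegrable_measureReal_setOf_le a b)
          intervalIntegrable_const).symm

/-- Exact expected check-loss increment for an atomless random variable whose
CDF satisfies `F(0) = τ`. -/
theorem expected_check_loss_increment {Ω : Type*} [MeasurableSpace Ω]
    (μ : Measure Ω) [IsProbabilityMeasure μ] (X : Ω → ℝ) (hX : Measurable X)
    (hatomless : NoAtoms (μ.map X)) (τ : ℝ) (hτ0 : 0 < τ) (hτ1 : τ < 1)
    (hF0 : (μ {ω | X ω ≤ 0}).toReal = τ) (v : ℝ) :
    Integrable (fun ω => rho τ (X ω - v) - rho τ (X ω)) μ ∧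
      ∫ ω, (rho τ (X ω - v) - rho τ (X ω)) ∂μ =
        ∫ s in (0:ℝ)..v, ((μ {ω | X ω ≤ s}).toReal - τ) := by
  simpa only [sub_zero, Measure.real] using
    expected_check_loss_increment_general hX.aemeasurable τ 0 v
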